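/- Let C be a spherical pre-fusion category over a commutative ring k. For every simple object i of C and every endomorphism f ∈ End(i): f = dim(i)^{-1} · tr(f) · id_i, where dim(i) is invertible in k; equivalently, dim(i)·f = tr(f)·id_i. -/

import Mathlib

open CategoryTheory CategoryTheory.Limits MonoidalCategory

universe v u w

/-- A pivotal category: a monoidal category in which every object is equipped with a dual
object and with evaluation/coevaluation morphisms forming a left duality and a right
duality, such that left and right duals of morphisms coincide, the left and right
monoidal constraints coincide, and the left and right evaluations of the unit coincide. -/
class PivotalCat (C : Type u) [Category.{v} C] [MonoidalCategory C] where
  dual : C → C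
  evl : ∀ X : C, dual X ⊗ X ⟶ 𝟙_ C
  coevl : ∀ X : C, 𝟙_ C ⟶ X ⊗ dual X
  evr : ∀ X : C, X ⊗ dual X ⟶ 𝟙_ C
  coevr : ∀ X : C, 𝟙_ C ⟶ dual X ⊗ X
  left_zigzag₁ : ∀ X : C,
    (λ_ X).inv ≫ (coevl X ▷ X) ≫ (α_ X (dual X) X).hom ≫ (X ◁ evl X) ≫ (ρ_ X).hom = 𝟙 X
  left_zigzag₂ : ∀ X : C,
    (ρ_ (dual X)).inv ≫ (dual X ◁ coevl X) ≫ (α_ (dual X) X (dual X)).inv ≫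
      (evl X ▷ dual X) ≫ (λ_ (dual X)).hom = 𝟙 (dual X)
  right_zigzag₁ : ∀ X : C,
    (ρ_ X).inv ≫ (X ◁ coevr X) ≫ (α_ X (dual X) X).inv ≫ (evr X ▷ X) ≫ (λ_ X).hom = 𝟙 X
  right_zigzag₂ : ∀ X : C,
    (λ_ (dual X)).inv ≫ (coevr X ▷ dual X) ≫ (α_ (dual X) X (dual X)).hom ≫
      (dual X ◁ evr X) ≫ (ρ_ (dual X)).hom = 𝟙 (dual X)
  ldual_eq_rdual : ∀ {X Y : C} (f : X ⟶ Y),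
    (ρ_ (dual Y)).inv ≫ (dual Y ◁ coevl X) ≫ (dual Y ◁ (f ▷ dual X)) ≫
      (α_ (dual Y) Y (dual X)).inv ≫ (evl Y ▷ dual X) ≫ (λ_ (dual X)).hom =
    (λ_ (dual Y)).inv ≫ (coevr X ▷ dual Y) ≫ ((dual X ◁ f) ▷ dual Y) ≫
      (α_ (dual X) Y (dual Y)).hom ≫ (dual X ◁ evr Y) ≫ (ρ_ (dual X)).hom
  constraint_eq : ∀ X Y : C,
    (ρ_ (dual X ⊗ dual Y)).inv ≫ ((dual X ⊗ dual Y) ◁ coevl (Y ⊗ X)) ≫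
      (α_ (dual X) (dual Y) ((Y ⊗ X) ⊗ dual (Y ⊗ X))).hom ≫
      (dual X ◁ (α_ (dual Y) (Y ⊗ X) (dual (Y ⊗ X))).inv) ≫
      (dual X ◁ (((α_ (dual Y) Y X).inv ≫ (evl Y ▷ X) ≫ (λ_ X).hom) ▷ dual (Y ⊗ X))) ≫
      (α_ (dual X) X (dual (Y ⊗ X))).inv ≫ (evl X ▷ dual (Y ⊗ X)) ≫ (λ_ (dual (Y ⊗ X))).hom =
    (λ_ (dual X ⊗ dual Y)).inv ≫ (coevr (Y ⊗ X) ▷ (dual X ⊗ dual Y)) ≫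
      (α_ (dual (Y ⊗ X)) (Y ⊗ X) (dual X ⊗ dual Y)).hom ≫
      (dual (Y ⊗ X) ◁ ((α_ Y X (dual X ⊗ dual Y)).hom ≫ (Y ◁ (α_ X (dual X) (dual Y)).inv) ≫
        (Y ◁ (evr X ▷ dual Y)) ≫ (Y ◁ (λ_ (dual Y)).hom) ≫ evr Y)) ≫
      (ρ_ (dual (Y ⊗ X))).hom
  ev_unit : (ρ_ (dual (𝟙_ C))).inv ≫ evl (𝟙_ C) = (λ_ (dual (𝟙_ C))).inv ≫ evr (𝟙_ C)

namespace PivotalCat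

variable {C : Type u} [Category.{v} C] [MonoidalCategory C] [PivotalCat C]

/-- The (common left = right) dual of a morphism. -/
def pdual {X Y : C} (f : X ⟶ Y) : dual Y ⟶ dual X :=
  (ρ_ (dual Y)).inv ≫ (dual Y ◁ coevl X) ≫ (dual Y ◁ (f ▷ dual X)) ≫
    (α_ (dual Y) Y (dual X)).inv ≫ (evl Y ▷ dual X) ≫ (λ_ (dual X)).hom

/-- The (common left = right) pivotal monoidal constraint `X* ⊗ Y* ⟶ (Y ⊗ X)*`. -/
def mcon (X Y : C) : dual X ⊗ dual Y ⟶ dual (Y ⊗ X) :=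
  (ρ_ (dual X ⊗ dual Y)).inv ≫ ((dual X ⊗ dual Y) ◁ coevl (Y ⊗ X)) ≫
    (α_ (dual X) (dual Y) ((Y ⊗ X) ⊗ dual (Y ⊗ X))).hom ≫
    (dual X ◁ (α_ (dual Y) (Y ⊗ X) (dual (Y ⊗ X))).inv) ≫
    (dual X ◁ (((α_ (dual Y) Y X).inv ≫ (evl Y ▷ X) ≫ (λ_ X).hom) ▷ dual (Y ⊗ X))) ≫
    (α_ (dual X) X (dual (Y ⊗ X))).inv ≫ (evl X ▷ dual (Y ⊗ X)) ≫ (λ_ (dual (Y ⊗ X))).hom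

/-- The left trace of an endomorphism. -/
def trl {X : C} (f : X ⟶ X) : 𝟙_ C ⟶ 𝟙_ C := coevr X ≫ (dual X ◁ f) ≫ evl X

/-- The right trace of an endomorphism. -/
def trr {X : C} (f : X ⟶ X) : 𝟙_ C ⟶ 𝟙_ C := coevl X ≫ (f ▷ dual X) ≫ evr X

/-- The left dimension of an object, as an endomorphism of the unit. -/
def diml (X : C) : 𝟙_ C ⟶ 𝟙_ C := trl (𝟙 X)

/-- The right dimension of an object, as an endomorphism of the unit. -/
def dimr (X : C) : 𝟙_ C ⟶ 𝟙_ C := trr (𝟙 X)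

/-- The permutation map `σ_{X,Y} : Hom(𝟙, X ⊗ Y) → Hom(𝟙, Y ⊗ X)`,
`α ↦ (ev_l X ⊗ id_{Y⊗X}) ∘ (id_{X*} ⊗ α ⊗ id_X) ∘ coev_r X`. -/
def sigmaMap (X Y : C) (a : 𝟙_ C ⟶ X ⊗ Y) : 𝟙_ C ⟶ Y ⊗ X :=
  coevr X ≫ (dual X ◁ (λ_ X).inv) ≫ (dual X ◁ (a ▷ X)) ≫ (dual X ◁ (α_ X Y X).hom) ≫
    (α_ (dual X) X (Y ⊗ X)).inv ≫ (evl X ▷ (Y ⊗ X)) ≫ (λ_ (Y ⊗ X)).hom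

end PivotalCat

/-- A pivotal category is spherical when left and right traces coincide. -/
class SphericalCat (C : Type u) [Category.{v} C] [MonoidalCategory C] [PivotalCat C] : Prop where
  tr_eq : ∀ {X : C} (f : X ⟶ X), PivotalCat.trl f = PivotalCat.trr f
/-- An object `X` of a `k`-linear category is simple if `λ ↦ λ • id_X` is a bijection
`k → End X`. -/
def IsSimpleObj (k : Type w) [CommRing k] {C : Type u} [Category.{v} C]
    [Preadditive C] [CategoryTheory.Linear k C] (X : C) : Prop :=
  Function.Bijective fun a : k => a • 𝟙 X

/-- A monoidal `k`-category: the hom-sets are `k`-modules, composition and the monoidal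
product are `k`-bilinear (all this is encoded in the instance parameters), and
`End(𝟙)` is free of rank one via `λ ↦ λ • id`. -/
class MonoidalKCat (k : Type w) [CommRing k] (C : Type u) [Category.{v} C]
    [Preadditive C] [CategoryTheory.Linear k C] [MonoidalCategory C]
    [MonoidalPreadditive C] [CategoryTheory.MonoidalLinear k C] : Prop where
  unit_free : Function.Bijective fun a : k => a • 𝟙 (𝟙_ C)

/-- The identification `End(𝟙) = k` of a monoidal `k`-category. -/
noncomputable def toScalar (k : Type w) [CommRing k] {C : Type u} [Category.{v} C]
    [Preadditive C] [CategoryTheory.Linear k C] [MonoidalCategory C]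
    [MonoidalPreadditive C] [CategoryTheory.MonoidalLinear k C] [MonoidalKCat k C]
    (f : 𝟙_ C ⟶ 𝟙_ C) : k :=
  (Equiv.ofBijective (fun a : k => a • 𝟙 (𝟙_ C))
    (MonoidalKCat.unit_free (k := k) (C := C))).symm f

/-- The left dimension of an object as an element of `k`. -/
noncomputable def sdiml (k : Type w) [CommRing k] {C : Type u} [Category.{v} C]
    [Preadditive C] [CategoryTheory.Linear k C] [MonoidalCategory C]
    [MonoidalPreadditive C] [CategoryTheory.MonoidalLinear k C] [PivotalCat C]
    [MonoidalKCat k C] (X : C) : k :=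
  toScalar k (PivotalCat.diml X)

/-- The right dimension of an object as an element of `k`. -/
noncomputable def sdimr (k : Type w) [CommRing k] {C : Type u} [Category.{v} C]
    [Preadditive C] [CategoryTheory.Linear k C] [MonoidalCategory C]
    [MonoidalPreadditive C] [CategoryTheory.MonoidalLinear k C] [PivotalCat C]
    [MonoidalKCat k C] (X : C) : k :=
  toScalar k (PivotalCat.dimr X)

/-- A pre-fusion category over `k`: a pivotal `k`-category in which every finite family of
objects has a direct sum, every object is a finite direct sum of simple objects, and there
are no nonzero morphisms between non-isomorphic simple objects. -/
class PreFusionCat (k : Type w) [CommRing k] (C : Type u) [Category.{v} C]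
    [Preadditive C] [CategoryTheory.Linear k C] [MonoidalCategory C]
    [MonoidalPreadditive C] [CategoryTheory.MonoidalLinear k C]
    [CategoryTheory.Limits.HasFiniteBiproducts C] [PivotalCat C] [MonoidalKCat k C] : Prop where
  semisimple : ∀ X : C, ∃ (n : ℕ) (obj : Fin n → C) (p : ∀ a, X ⟶ obj a) (q : ∀ a, obj a ⟶ X),
    (∀ a, IsSimpleObj k (obj a)) ∧ (∑ a, p a ≫ q a = 𝟙 X) ∧
    (∀ a, q a ≫ p a = 𝟙 (obj a)) ∧ (∀ a b, a ≠ b → q a ≫ p b = 0)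
  simple_hom_zero : ∀ {i j : C}, IsSimpleObj k i → IsSimpleObj k j →
    IsEmpty (i ≅ j) → ∀ f : i ⟶ j, f = 0

/-- A fusion category over `k`: a pre-fusion category with finitely many isomorphism
classes of simple objects. -/
class FusionCat (k : Type w) [CommRing k] (C : Type u) [Category.{v} C]
    [Preadditive C] [CategoryTheory.Linear k C] [MonoidalCategory C]
    [MonoidalPreadditive C] [CategoryTheory.MonoidalLinear k C]
    [CategoryTheory.Limits.HasFiniteBiproducts C] [PivotalCat C] [MonoidalKCat k C]
    [PreFusionCat k C] : Prop where
  finitely_many_simples : ∃ S : Set C, S.Finite ∧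
    ∀ i : C, IsSimpleObj k i → ∃ j ∈ S, Nonempty (i ≅ j)

/-- A representative set of simple objects: it contains the unit object, consists of simple
objects, and every simple object is isomorphic to exactly one of its elements. -/
def IsRepresentativeSet (k : Type w) [CommRing k] (C : Type u) [Category.{v} C]
    [Preadditive C] [CategoryTheory.Linear k C] [MonoidalCategory C] (I : Set C) : Prop :=
  (𝟙_ C) ∈ I ∧ (∀ i ∈ I, IsSimpleObj k i) ∧
    ∀ X : C, IsSimpleObj k X → ∃! i, i ∈ I ∧ Nonempty (X ≅ i)

/-- The dimension of a fusion category with (finite) representative set `I` of simple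
objects: `dim C = ∑_{i ∈ I} dim_l(i) · dim_r(i)`. -/
noncomputable def catDim (k : Type w) [CommRing k] {C : Type u} [Category.{v} C]
    [Preadditive C] [CategoryTheory.Linear k C] [MonoidalCategory C]
    [MonoidalPreadditive C] [CategoryTheory.MonoidalLinear k C] [PivotalCat C]
    [MonoidalKCat k C] (I : Finset C) : k :=
  ∑ i ∈ I, sdiml k i * sdimr k i

section Helpers

/-- The left duality as an exact pairing. -/
def pairL {C : Type u} [Category.{v} C] [MonoidalCategory C] [PivotalCat C] (X : C) :
    ExactPairing X (PivotalCat.dual X) where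
  coevaluation' := PivotalCat.coevl X
  evaluation' := PivotalCat.evl X
  coevaluation_evaluation' := by
    have h := PivotalCat.left_zigzag₂ X
    rw [Iso.inv_comp_eq] at h
    rw [← cancel_mono (λ_ (PivotalCat.dual X)).hom]
    simpa using h
  evaluation_coevaluation' := by
    have h := PivotalCat.left_zigzag₁ X
    rw [Iso.inv_comp_eq] at h
    rw [← cancel_mono (ρ_ X).hom]
    simpa using h

/-- The right duality as an exact pairing. -/
def pairR {C : Type u} [Category.{v} C] [MonoidalCategory C] [PivotalCat C] (X : C) :
    ExactPairing (PivotalCat.dual X) X where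
  coevaluation' := PivotalCat.coevr X
  evaluation' := PivotalCat.evr X
  coevaluation_evaluation' := by
    have h := PivotalCat.right_zigzag₁ X
    rw [Iso.inv_comp_eq] at h
    rw [← cancel_mono (λ_ X).hom]
    simpa using h
  evaluation_coevaluation' := by
    have h := PivotalCat.right_zigzag₂ X
    rw [Iso.inv_comp_eq] at h
    rw [← cancel_mono (ρ_ (PivotalCat.dual X)).hom]
    simpa using h

theorem exists_smul_coevl (k : Type w) [CommRing k] {C : Type u}
    [Category.{v} C] [Preadditive C] [CategoryTheory.Linear k C] [MonoidalCategory C]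
    [MonoidalPreadditive C] [CategoryTheory.MonoidalLinear k C] [PivotalCat C]
    {i : C} (hi : IsSimpleObj k i) (h : 𝟙_ C ⟶ i ⊗ PivotalCat.dual i) :
    ∃ d : k, h = d • PivotalCat.coevl i := by
  letI := pairL i
  obtain ⟨g, rfl⟩ := (tensorRightHomEquiv (𝟙_ C) i (PivotalCat.dual i) i).surjective h
  obtain ⟨d, hd⟩ := hi.2 ((λ_ i).inv ≫ g)
  refine ⟨d, ?_⟩
  have hg : g = d • (λ_ i).hom := by
    have : g = (λ_ i).hom ≫ (d • 𝟙 i) := by dsimp only at hd; rw [hd]; simp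
    simpa using this
  subst hg
  have : (tensorRightHomEquiv (𝟙_ C) i (PivotalCat.dual i) i) (d • (λ_ i).hom)
    = (ρ_ (𝟙_ C)).inv ≫ 𝟙_ C ◁ PivotalCat.coevl i ≫ (α_ _ _ _).inv ≫
      (d • (λ_ i).hom) ▷ PivotalCat.dual i := rfl
  rw [this]
  simp [CategoryTheory.MonoidalLinear.smul_whiskerRight, ← unitors_inv_equal]

theorem exists_smul_evr (k : Type w) [CommRing k] {C : Type u}
    [Category.{v} C] [Preadditive C] [CategoryTheory.Linear k C] [MonoidalCategory C]
    [MonoidalPreadditive C] [CategoryTheory.MonoidalLinear k C] [PivotalCat C]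
    {i : C} (hi : IsSimpleObj k i) (h : i ⊗ PivotalCat.dual i ⟶ 𝟙_ C) :
    ∃ d : k, h = d • PivotalCat.evr i := by
  letI := pairR i
  obtain ⟨g, rfl⟩ :=
    (tensorRightHomEquiv i (PivotalCat.dual i) i (𝟙_ C)).symm.surjective h
  obtain ⟨d, hd⟩ := hi.2 (g ≫ (λ_ i).hom)
  refine ⟨d, ?_⟩
  have hg : g = d • (λ_ i).inv := by
    have : g = (d • 𝟙 i) ≫ (λ_ i).inv := by dsimp only at hd; rw [hd]; simp
    simpa using this
  subst hg
  have : (tensorRightHomEquiv i (PivotalCat.dual i) i (𝟙_ C)).symm (d • (λ_ i).inv)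
    = (d • (λ_ i).inv) ▷ PivotalCat.dual i ≫ (α_ _ _ _).hom ≫
      𝟙_ C ◁ PivotalCat.evr i ≫ (ρ_ (𝟙_ C)).hom := rfl
  rw [this]
  simp [CategoryTheory.MonoidalLinear.smul_whiskerRight, ← unitors_equal]

theorem toScalar_spec (k : Type w) [CommRing k] {C : Type u} [Category.{v} C]
    [Preadditive C] [CategoryTheory.Linear k C] [MonoidalCategory C]
    [MonoidalPreadditive C] [CategoryTheory.MonoidalLinear k C] [MonoidalKCat k C]
    (f : 𝟙_ C ⟶ 𝟙_ C) : toScalar k f • 𝟙 (𝟙_ C) = f :=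
  (Equiv.ofBijective (fun a : k => a • 𝟙 (𝟙_ C))
    (MonoidalKCat.unit_free (k := k) (C := C))).apply_symm_apply f

theorem isUnit_sdimr (k : Type w) [CommRing k] {C : Type u}
    [Category.{v} C] [Preadditive C] [CategoryTheory.Linear k C] [MonoidalCategory C]
    [MonoidalPreadditive C] [CategoryTheory.MonoidalLinear k C]
    [CategoryTheory.Limits.HasFiniteBiproducts C] [PivotalCat C] [MonoidalKCat k C]
    [PreFusionCat k C] {i : C} (hi : IsSimpleObj k i) : IsUnit (sdimr k i) := by
  have hinj := (MonoidalKCat.unit_free (k := k) (C := C)).1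
  obtain ⟨n, obj, p, q, hs, hsum, hpq, -⟩ :=
    PreFusionCat.semisimple (k := k) (i ⊗ PivotalCat.dual i)
  by_cases hA : ∃ a, Nonempty (𝟙_ C ≅ obj a)
  · obtain ⟨a, ⟨φ⟩⟩ := hA
    obtain ⟨d, hd⟩ := exists_smul_coevl k hi (φ.hom ≫ q a)
    obtain ⟨e, he⟩ := exists_smul_evr k hi (p a ≫ φ.inv)
    refine IsUnit.of_mul_eq_one (d * e) (hinj ?_)
    have h1 : (φ.hom ≫ q a) ≫ (p a ≫ φ.inv) = 𝟙 _ := by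
      simp [reassoc_of% (hpq a)]
    rw [hd, he] at h1
    have h2 : PivotalCat.coevl i ≫ PivotalCat.evr i = sdimr k i • 𝟙 (𝟙_ C) := by
      rw [sdimr, toScalar_spec]; simp [PivotalCat.dimr, PivotalCat.trr]
    simp only [CategoryTheory.Linear.smul_comp, CategoryTheory.Linear.comp_smul, h2,
      smul_smul] at h1
    simp only [one_smul]
    rw [← h1]
    congr 1
    ring
  · have h0 : PivotalCat.coevl i = 0 := by
      rw [← Category.comp_id (PivotalCat.coevl i), ← hsum, Preadditive.comp_sum]
      refine Finset.sum_eq_zero fun a _ => ?_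
      have : PivotalCat.coevl i ≫ p a = 0 :=
        PreFusionCat.simple_hom_zero (k := k) (MonoidalKCat.unit_free (k := k) (C := C)) (hs a)
          ⟨fun φ => hA ⟨a, ⟨φ⟩⟩⟩ _
      rw [← Category.assoc, this, zero_comp]
    have h1 := PivotalCat.left_zigzag₁ i
    rw [h0] at h1
    have h2 : 𝟙 i = 0 := by rw [← h1]; simp
    have h3 : (0 : k) = 1 := hi.1 (by simp [h2])
    have := subsingleton_of_zero_eq_one h3
    exact isUnit_of_subsingleton _

end Helpers

/-- In a spherical pre-fusion category over a commutative ring `k`, any endomorphism `f` of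
a simple object `i` satisfies `f = dim(i)⁻¹ · tr(f) · id_i`, where `dim(i)` is invertible
in `k`; equivalently, `dim(i) · f = tr(f) · id_i`. -/
theorem spherical_preFusion_endo_simple (k : Type w) [CommRing k] (C : Type u)
    [Category.{v} C] [Preadditive C] [CategoryTheory.Linear k C] [MonoidalCategory C]
    [MonoidalPreadditive C] [CategoryTheory.MonoidalLinear k C]
    [CategoryTheory.Limits.HasFiniteBiproducts C] [PivotalCat C] [MonoidalKCat k C]
    [PreFusionCat k C] [SphericalCat C] {i : C} (hi : IsSimpleObj k i) (f : i ⟶ i) :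
    IsUnit (sdiml k i) ∧
    sdiml k i • f = toScalar k (PivotalCat.trl f) • 𝟙 i ∧
    f = Ring.inverse (sdiml k i) • toScalar k (PivotalCat.trl f) • 𝟙 i := by
  have hu : IsUnit (sdiml k i) := by
    have : sdiml k i = sdimr k i := by
      rw [sdiml, sdimr, PivotalCat.diml, PivotalCat.dimr, SphericalCat.tr_eq]
    rw [this]
    exact isUnit_sdimr k hi
  obtain ⟨a, rfl⟩ := hi.2 f
  have ht : toScalar k (PivotalCat.trl (a • 𝟙 i)) = a * sdiml k i := by
    apply (MonoidalKCat.unit_free (k := k) (C := C)).1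
    simp only [mul_smul]
    rw [toScalar_spec, sdiml, toScalar_spec]
    simp [PivotalCat.diml, PivotalCat.trl, CategoryTheory.MonoidalLinear.whiskerLeft_smul]
  refine ⟨hu, ?_, ?_⟩
  · simp only [ht, smul_smul, mul_comm]
  · simp only [ht, smul_smul]
    rw [mul_comm a, ← mul_assoc, Ring.inverse_mul_cancel _ hu, one_mul]
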